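/- Let K be a finite field with Q elements, let n and r be positive integers, and for each 1 ≤ i ≤ r let f_i be a homogeneous polynomial of degree d_i ≥ 1 in the n+1 variables T_0, …, T_n with coefficients in K. If d_1 + ⋯ + d_r ≤ n, then the number of points of the projective space P^n(K) (the projectivization of the K-vector space K^{n+1}) at which all of the polynomials f_1, …, f_r vanish is congruent to 1 modulo Q. -/

import Mathlib

/-!
Let `q = p ^ a` be the cardinality of `K` and lift `f` to a polynomial `g` over the Witt vectors of
`K`. Modulo `q`, the power `g(x) ^ M` with `M = q * (q - 1)`, evaluated at a Teichmüller point,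
is the indicator of `f ≠ 0`. Expanding `∑ x, g(x) ^ M` by the multinomial theorem, the term of
index `k` is a multiple of a product of power sums over `K` with exponents `∑ w, k w * w i`. If some
exponent is zero or not a multiple of `q - 1`, its power sum is divisible by `q`. In every other
term `q` divides the multinomial coefficient: by Legendre's formula this is a lower bound for
the digit sums of the `k w`. Rotating the base-`p` digits modulo `q - 1` preserves all divisibility
conditions, and since `deg f` is less than the number of variables each of the `a` rotations has
total at least `2 * (q - 1)`; adding them up gives the bound. Inclusion-exclusion passes from one
polynomial to several, and the affine count is `(q - 1)` times the projective count plus one.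
-/

open Finset

section DigitRotation

variable {p : ℕ}

lemma pow_mod_modEq_pow (hp : 0 < p) (a m : ℕ) : p ^ (m % a) ≡ p ^ m [MOD p ^ a - 1] := by
  have pow_modEq_one : p ^ a ≡ 1 [MOD p ^ a - 1] :=
    ((Nat.modEq_iff_dvd' (Nat.one_le_pow _ _ hp)).2 dvd_rfl).symm
  conv_rhs => rw [← Nat.mod_add_div m a, pow_add, pow_mul]
  simpa using ((pow_modEq_one.pow (m / a)).mul_left (p ^ (m % a))).symm

lemma sum_range_comp_add_mod {M : Type*} [AddCommMonoid M] (f : ℕ → M) (a e : ℕ) :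
    ∑ l ∈ range a, f ((e + l) % a) = ∑ l ∈ range a, f l := by
  calc ∑ l ∈ range a, f ((e + l) % a) = ∑ m ∈ Ico e (e + a), f (m % a) := by
        rw [sum_Ico_eq_sum_range, Nat.add_sub_cancel_left]
    _ = ∑ l ∈ range a, f l := by
        rw [← Nat.image_Ico_mod e a, sum_image (Nat.mod_injOn_Ico e a)]

/-- A multiset `E` of exponents encodes the number `∑ e ∈ E, p ^ e`. This is the number obtained
from it by moving every exponent `l` places cyclically modulo `a`; when `E` comes from the base-`p`
digits of a number below `p ^ a`, it is the cyclic rotation of these digits. -/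
def rotatedPowSum (p a l : ℕ) (E : Multiset ℕ) : ℕ :=
  (E.map fun e ↦ p ^ ((e + l) % a)).sum

lemma rotatedPowSum_modEq (hp : 0 < p) (a l : ℕ) (E : Multiset ℕ) :
    rotatedPowSum p a l E ≡ p ^ l * (E.map (p ^ ·)).sum [MOD p ^ a - 1] := by
  induction E using Multiset.induction_on with
  | empty => simp [rotatedPowSum, Nat.ModEq.refl]
  | cons e E ih =>
    simp only [rotatedPowSum, Multiset.map_cons, Multiset.sum_cons, mul_add] at ih ⊢
    refine Nat.ModEq.add ?_ ih
    rw [← pow_add, add_comm l]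
    exact pow_mod_modEq_pow hp a (e + l)

lemma rotatedPowSum_pos (hp : 0 < p) (a l : ℕ) {E : Multiset ℕ} (hE : E ≠ 0) :
    0 < rotatedPowSum p a l E := by
  obtain ⟨e, he⟩ := Multiset.exists_mem_of_ne_zero hE
  exact (pow_pos hp _).trans_le
    (Multiset.single_le_sum (by simp) _ (Multiset.mem_map_of_mem _ he))

lemma sum_rotatedPowSum (p a : ℕ) (E : Multiset ℕ) :
    ∑ l ∈ range a, rotatedPowSum p a l E = E.card * ∑ l ∈ range a, p ^ l := by
  simp only [rotatedPowSum, Finset.sum_eq_multiset_sum]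
  rw [Multiset.sum_map_sum_map]
  simp only [← Finset.sum_eq_multiset_sum, sum_range_comp_add_mod (p ^ ·)]
  simp

lemma exists_multiset_map_pow_sum_eq_ofDigits (p : ℕ) (L : List ℕ) :
    ∃ E : Multiset ℕ, E.card = L.sum ∧ (E.map (p ^ ·)).sum = Nat.ofDigits p L := by
  induction L with
  | nil => exact ⟨0, by simp⟩
  | cons digit L ih =>
    obtain ⟨E, hcard, hsum⟩ := ih
    refine ⟨Multiset.replicate digit 0 + E.map (· + 1), by simp [hcard], ?_⟩
    simp [Nat.ofDigits_cons, ← hsum, pow_succ', Multiset.sum_map_mul_left]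

end DigitRotation

section WeightedSums

variable {ι σ : Type*} [Fintype σ] {s : Finset ι} {w : ι → σ → ℕ} {p a c d : ℕ}

lemma succ_mul_le_sum_of_le_weighted_sum {r : ι → ℕ} {Q : ℕ} (hcd : c * d < Fintype.card σ)
    (hw : ∀ j ∈ s, ∑ i, w j i ≤ d) (hr : ∀ i, Q ≤ ∑ j ∈ s, w j i * r j)
    (hdvd : Q ∣ ∑ j ∈ s, r j) :
    (c + 1) * Q ≤ ∑ j ∈ s, r j := by
  rcases Q.eq_zero_or_pos with rfl | hQ
  · simp
  obtain ⟨m, hm⟩ := hdvd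
  have card_mul_le : Fintype.card σ * Q ≤ d * m * Q :=
    calc Fintype.card σ * Q = ∑ _i : σ, Q := by simp
      _ ≤ ∑ i : σ, ∑ j ∈ s, w j i * r j := sum_le_sum fun i _ ↦ hr i
      _ = ∑ j ∈ s, (∑ i, w j i) * r j := by rw [sum_comm]; simp only [sum_mul]
      _ ≤ ∑ j ∈ s, d * r j := sum_le_sum fun j hj ↦ Nat.mul_le_mul_right _ (hw j hj)
      _ = d * m * Q := by rw [← mul_sum, hm]; ring
  have c_lt : c < m := by
    refine lt_of_mul_lt_mul_left ?_ d.zero_le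
    exact (mul_comm d c ▸ hcd).trans_le (Nat.le_of_mul_le_mul_right card_mul_le hQ)
  rw [hm, mul_comm Q]
  exact Nat.mul_le_mul_right Q c_lt

variable {E : ι → Multiset ℕ}

lemma succ_mul_le_sum_rotatedPowSum (hp : 0 < p) (hcd : c * d < Fintype.card σ)
    (hw : ∀ j ∈ s, ∑ i, w j i ≤ d) (hpos : ∀ i, 0 < ∑ j ∈ s, w j i * ((E j).map (p ^ ·)).sum)
    (hdvd : ∀ i, p ^ a - 1 ∣ ∑ j ∈ s, w j i * ((E j).map (p ^ ·)).sum)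
    (hsum : p ^ a - 1 ∣ ∑ j ∈ s, ((E j).map (p ^ ·)).sum) (l : ℕ) :
    (c + 1) * (p ^ a - 1) ≤ ∑ j ∈ s, rotatedPowSum p a l (E j) := by
  have dvd_rotated (v : ι → ℕ) (hv : p ^ a - 1 ∣ ∑ j ∈ s, v j * ((E j).map (p ^ ·)).sum) :
      p ^ a - 1 ∣ ∑ j ∈ s, v j * rotatedPowSum p a l (E j) := by
    refine (Nat.ModEq.dvd_iff (Nat.ModEq.sum fun j _ ↦
      (rotatedPowSum_modEq hp a l (E j)).mul_left (v j)) dvd_rfl).2 ?_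
    simpa only [mul_sum, mul_left_comm] using hv.mul_left (p ^ l)
  refine succ_mul_le_sum_of_le_weighted_sum hcd hw (fun i ↦ ?_) ?_
  · refine Nat.le_of_dvd ?_ (dvd_rotated (w · i) (hdvd i))
    obtain ⟨j, hj, hij⟩ := sum_pos_iff.1 (hpos i)
    have hE : E j ≠ 0 := fun h ↦ by simp [h] at hij
    exact sum_pos_iff.2
      ⟨j, hj, Nat.mul_pos (Nat.pos_of_mul_pos_right hij) (rotatedPowSum_pos hp a l hE)⟩
  · simpa using dvd_rotated 1 (by simpa using hsum)

lemma succ_mul_le_sum_card (hp : 1 < p) (hcd : c * d < Fintype.card σ)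
    (hw : ∀ j ∈ s, ∑ i, w j i ≤ d) (hpos : ∀ i, 0 < ∑ j ∈ s, w j i * ((E j).map (p ^ ·)).sum)
    (hdvd : ∀ i, p ^ a - 1 ∣ ∑ j ∈ s, w j i * ((E j).map (p ^ ·)).sum)
    (hsum : p ^ a - 1 ∣ ∑ j ∈ s, ((E j).map (p ^ ·)).sum) :
    (c + 1) * (a * (p - 1)) ≤ ∑ j ∈ s, (E j).card := by
  rcases a.eq_zero_or_pos with rfl | ha
  · simp
  have geom_pos : 0 < ∑ l ∈ range a, p ^ l :=
    sum_pos (fun l _ ↦ pow_pos (by omega) l) ⟨0, mem_range.2 ha⟩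
  have geom_eq : (p - 1) * ∑ l ∈ range a, p ^ l = p ^ a - 1 := by
    rw [Nat.geomSum_eq hp, Nat.mul_div_cancel' (by simpa using Nat.sub_dvd_pow_sub_pow p 1 a)]
  refine Nat.le_of_mul_le_mul_right ?_ geom_pos
  calc (c + 1) * (a * (p - 1)) * ∑ l ∈ range a, p ^ l
      = ∑ _l ∈ range a, (c + 1) * (p ^ a - 1) := by
        rw [sum_const, card_range, smul_eq_mul, ← geom_eq]; ring
    _ ≤ ∑ l ∈ range a, ∑ j ∈ s, rotatedPowSum p a l (E j) := sum_le_sum fun l _ ↦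
        succ_mul_le_sum_rotatedPowSum (by omega) hcd hw hpos hdvd hsum l
    _ = (∑ j ∈ s, (E j).card) * ∑ l ∈ range a, p ^ l := by
        rw [sum_comm, sum_mul]
        exact sum_congr rfl fun j _ ↦ sum_rotatedPowSum p a (E j)

lemma succ_mul_le_sum_digits_sum {k : ι → ℕ} (hp : 1 < p) (hcd : c * d < Fintype.card σ)
    (hw : ∀ j ∈ s, ∑ i, w j i ≤ d) (hpos : ∀ i, 0 < ∑ j ∈ s, w j i * k j)
    (hdvd : ∀ i, p ^ a - 1 ∣ ∑ j ∈ s, w j i * k j) (hsum : p ^ a - 1 ∣ ∑ j ∈ s, k j) :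
    (c + 1) * (a * (p - 1)) ≤ ∑ j ∈ s, (p.digits (k j)).sum := by
  choose E hcard hval using fun j ↦ exists_multiset_map_pow_sum_eq_ofDigits p (p.digits (k j))
  simp only [Nat.ofDigits_digits] at hval
  simp only [← hval] at hpos hdvd hsum
  simpa only [hcard] using succ_mul_le_sum_card hp hcd hw hpos hdvd hsum

end WeightedSums

section Multinomial

variable {ι : Type*} {p : ℕ}

lemma digits_sum_pow_sub_one (hp : 1 < p) (a : ℕ) : (p.digits (p ^ a - 1)).sum = a * (p - 1) := by
  induction a with
  | zero => simp
  | succ a ih =>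
    have peel_digit : p ^ (a + 1) - 1 = (p - 1) + p * (p ^ a - 1) := by
      have := Nat.mul_le_mul_left p (Nat.one_le_pow a p (by omega))
      rw [Nat.mul_sub, pow_succ']
      omega
    rw [peel_digit, Nat.digits_add p hp _ _ (by omega) (by left; omega), List.sum_cons, ih]
    ring

lemma digits_sum_pow_mul (hp : 1 < p) (N m : ℕ) :
    (p.digits (p ^ N * m)).sum = (p.digits m).sum := by
  rcases m.eq_zero_or_pos with rfl | hm
  · simp
  · simp [Nat.digits_base_pow_mul hp hm]

variable [hp : Fact p.Prime]

lemma sub_one_mul_padicValNat_factorial_add_digits_sum (n : ℕ) :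
    (p - 1) * padicValNat p n.factorial + (p.digits n).sum = n := by
  rw [sub_one_mul_padicValNat_factorial, Nat.sub_add_cancel (Nat.digit_sum_le p n)]

lemma padicValNat_prod {s : Finset ι} {f : ι → ℕ} (hf : ∀ j ∈ s, f j ≠ 0) :
    padicValNat p (∏ j ∈ s, f j) = ∑ j ∈ s, padicValNat p (f j) := by
  simpa only [Nat.factorization_def _ hp.out, Finsupp.finsetSum_apply] using
    DFunLike.congr_fun (Nat.factorization_prod hf) p

lemma sub_one_mul_padicValNat_multinomial_add_digits_sum (s : Finset ι) (k : ι → ℕ) :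
    (p - 1) * padicValNat p (Nat.multinomial s k) + (p.digits (∑ j ∈ s, k j)).sum =
      ∑ j ∈ s, (p.digits (k j)).sum := by
  have valuation_spec : ∑ j ∈ s, padicValNat p (k j).factorial +
      padicValNat p (Nat.multinomial s k) = padicValNat p (∑ j ∈ s, k j).factorial := by
    rw [← Nat.multinomial_spec, padicValNat.mul (by positivity) (Nat.multinomial_pos s k).ne',
      padicValNat_prod fun j _ ↦ (k j).factorial_ne_zero]
  have legendre_sum := sub_one_mul_padicValNat_factorial_add_digits_sum (p := p) (∑ j ∈ s, k j)
  have sum_legendre : ∑ j ∈ s,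
      ((p - 1) * padicValNat p (k j).factorial + (p.digits (k j)).sum) = ∑ j ∈ s, k j :=
    sum_congr rfl fun j _ ↦ sub_one_mul_padicValNat_factorial_add_digits_sum (k j)
  rw [← valuation_spec, mul_add] at legendre_sum
  rw [sum_add_distrib, ← mul_sum] at sum_legendre
  omega

theorem pow_dvd_multinomial {σ : Type*} [Fintype σ] {s : Finset ι} {k : ι → ℕ} {w : ι → σ → ℕ}
    {a c d N : ℕ} (hcd : c * d < Fintype.card σ) (hw : ∀ j ∈ s, ∑ i, w j i ≤ d)
    (hk : ∑ j ∈ s, k j = p ^ N * (p ^ a - 1)) (hpos : ∀ i, 0 < ∑ j ∈ s, w j i * k j)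
    (hdvd : ∀ i, p ^ a - 1 ∣ ∑ j ∈ s, w j i * k j) :
    p ^ (a * c) ∣ Nat.multinomial s k := by
  have one_lt := hp.out.one_lt
  have digits_bound := succ_mul_le_sum_digits_sum one_lt hcd hw hpos hdvd
    (hk ▸ dvd_mul_left _ _)
  have kummer := sub_one_mul_padicValNat_multinomial_add_digits_sum (p := p) s k
  rw [hk, digits_sum_pow_mul one_lt, digits_sum_pow_sub_one one_lt] at kummer
  refine (padicValNat_dvd_iff_le (Nat.multinomial_pos s k).ne').2 ?_
  refine Nat.le_of_mul_le_mul_left ?_ (Nat.sub_pos_of_lt one_lt)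
  linarith

end Multinomial

section PowerSums

variable {K R σ : Type*} [Fintype σ]

lemma sum_eval_pow_eq [DecidableEq σ] [DecidableEq (σ →₀ ℕ)] [Fintype K] [CommSemiring R]
    (T : K → R) (g : MvPolynomial σ R) (M : ℕ) :
    ∑ x : σ → K, MvPolynomial.eval (T ∘ x) g ^ M =
      ∑ k ∈ piAntidiag g.support M, Nat.multinomial g.support k *
        ((∏ w ∈ g.support, g.coeff w ^ k w) *
          ∏ i, ∑ y, T y ^ ∑ w ∈ g.support, w i * k w) := by
  simp only [MvPolynomial.eval_eq', sum_pow_eq_sum_piAntidiag]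
  rw [sum_comm]
  refine sum_congr rfl fun k _ ↦ ?_
  simp only [prod_univ_sum, Fintype.piFinset_univ, mul_sum]
  refine sum_congr rfl fun x _ ↦ ?_
  simp only [Function.comp_apply, mul_pow, prod_mul_distrib, ← prod_pow, ← pow_mul,
    ← prod_pow_eq_pow_sum]
  rw [prod_comm]

variable [Field K] [Fintype K] [CommRing R] [IsDomain R]

lemma card_dvd_sum_pow {T : K →* R} (hT : Function.Injective T) {m : ℕ}
    (hm : ¬(0 < m ∧ Fintype.card K - 1 ∣ m)) : (Fintype.card K : R) ∣ ∑ x, T x ^ m := by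
  rcases m.eq_zero_or_pos with rfl | hpos
  · simp
  obtain ⟨u, hu⟩ : ∃ u : Kˣ, u ^ m ≠ 1 := by
    simpa [← FiniteField.forall_pow_eq_one_iff] using fun h ↦ hm ⟨hpos, h⟩
  have mul_sum_eq : T u ^ m * ∑ x, T x ^ m = ∑ x, T x ^ m := by
    rw [mul_sum]
    exact Fintype.sum_equiv (Equiv.mulLeft₀ (u : K) u.ne_zero) _ _ fun x ↦ by simp [mul_pow]
  have ne_one : T u ^ m ≠ 1 := by
    rw [← map_pow, ← map_one T]
    exact hT.ne fun h ↦ hu (Units.ext (by simpa using h))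
  rw [eq_zero_of_mul_eq_self_left ne_one mul_sum_eq]
  exact dvd_zero _

theorem card_dvd_sum_eval_pow [DecidableEq σ] {p a : ℕ} [Fact p.Prime] (hK : Fintype.card K = p ^ a)
    {T : K →* R} (hT : Function.Injective T) {g : MvPolynomial σ R}
    (hg : g.totalDegree < Fintype.card σ) (N : ℕ) :
    (Fintype.card K : R) ∣
      ∑ x : σ → K, MvPolynomial.eval (T ∘ x) g ^ (p ^ N * (Fintype.card K - 1)) := by
  classical
  rw [sum_eval_pow_eq]
  refine dvd_sum fun k hk ↦ ?_
  by_cases hexp : ∀ i, 0 < ∑ w ∈ g.support, w i * k w ∧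
      Fintype.card K - 1 ∣ ∑ w ∈ g.support, w i * k w
  · have degree_le : ∀ w ∈ g.support, ∑ i, w i ≤ g.totalDegree := fun w hw ↦ by
      simpa [Finsupp.sum_fintype] using MvPolynomial.le_totalDegree hw
    have sum_k := (mem_piAntidiag.1 hk).1
    rw [hK] at hexp sum_k ⊢
    have := pow_dvd_multinomial (c := 1) (by simpa using hg) degree_le sum_k
      (fun i ↦ (hexp i).1) (fun i ↦ (hexp i).2)
    rw [mul_one] at this
    exact (Nat.cast_dvd_cast this).mul_right _
  · obtain ⟨i, hi⟩ := not_forall.1 hexp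
    have dvd_prod := (card_dvd_sum_pow hT hi).trans
      (dvd_prod_of_mem (fun i ↦ ∑ y, T y ^ ∑ w ∈ g.support, w i * k w) (mem_univ i))
    exact (dvd_prod.mul_left _).mul_left _

end PowerSums

section Lifting

lemma exists_map_eq_totalDegree_le {R S σ : Type*} [CommSemiring R] [CommSemiring S]
    {φ : R →+* S} (hφ : Function.Surjective φ) (f : MvPolynomial σ S) :
    ∃ g : MvPolynomial σ R, MvPolynomial.map φ g = f ∧ g.totalDegree ≤ f.totalDegree := by
  obtain ⟨lift, hlift⟩ := hφ.hasRightInverse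
  refine ⟨∑ w ∈ f.support, MvPolynomial.monomial w (lift (f.coeff w)), ?_,
    MvPolynomial.totalDegree_finsetSum_le fun w hw ↦ ?_⟩
  · simp [hlift _, MvPolynomial.support_sum_monomial_coeff]
  · exact (MvPolynomial.totalDegree_monomial_le _ _).trans (MvPolynomial.le_totalDegree hw)

lemma dvd_of_natCast_dvd_natCast {R : Type*} [CommRing R] [IsDomain R] {p : ℕ} (hp : p.Prime)
    (hp0 : (p : R) ≠ 0) (hpu : ¬IsUnit (p : R)) {a m : ℕ} (h : ((p ^ a : ℕ) : R) ∣ m) :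
    p ^ a ∣ m := by
  obtain ⟨b, -, hb⟩ := (Nat.dvd_prime_pow hp).1 (Nat.gcd_dvd_left (p ^ a) m)
  have bezout := congrArg (Int.cast (R := R)) (Nat.gcd_eq_gcd_ab (p ^ a) m)
  have cast_dvd : (p : R) ^ a ∣ (p : R) ^ b := by
    push_cast [hb] at bezout h
    rw [bezout]
    exact dvd_add (dvd_mul_right _ _) (h.mul_right _)
  have a_le_b := (pow_dvd_pow_iff hp0 hpu).1 cast_dvd
  exact (pow_dvd_pow p a_le_b).trans (hb ▸ Nat.gcd_dvd_right _ _)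

lemma pow_dvd_indicator_sub_pow {K R : Type*} [Field K] [Fintype K] [DecidableEq K] [CommRing R]
    {p : ℕ} [hp : Fact p.Prime] {φ : R →+* K} (hφ : ∀ z, φ z = 0 → (p : R) ∣ z) (N : ℕ) (y : R) :
    (p : R) ^ N ∣ (if φ y ≠ 0 then 1 else 0) - y ^ (p ^ N * (Fintype.card K - 1)) := by
  split_ifs with hy
  · have dvd_one_sub : (p : R) ∣ 1 - y ^ (Fintype.card K - 1) :=
      hφ _ (by simp [FiniteField.pow_card_sub_one_eq_one _ hy])
    have := dvd_sub_pow_of_dvd_sub dvd_one_sub N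
    rw [one_pow, ← pow_mul, mul_comm (Fintype.card K - 1)] at this
    exact (pow_dvd_pow _ N.le_succ).trans this
  · rw [zero_sub, dvd_neg]
    refine (pow_dvd_pow_of_dvd (hφ y (not_not.1 hy)) N).trans (pow_dvd_pow y ?_)
    have := Nat.sub_pos_of_lt (Fintype.one_lt_card (α := K))
    exact (Nat.lt_pow_self hp.out.one_lt).le.trans (Nat.le_mul_of_pos_right _ this)

end Lifting

section AffineZeros

variable {K σ : Type*} [Field K] [Fintype K] [Fintype σ]

section Lift

variable {R : Type*} [CommRing R] [IsDomain R] {p a : ℕ} [Fact p.Prime] [DecidableEq K]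
  [DecidableEq σ]

theorem natCast_card_dvd_card_eval_ne_zero (hK : Fintype.card K = p ^ a) {φ : R →+* K}
    (hφ : ∀ z, φ z = 0 → (p : R) ∣ z) {T : K →* R} (hT : Function.LeftInverse φ T)
    {f : MvPolynomial σ K} (hf : f.totalDegree < Fintype.card σ) :
    (Fintype.card K : R) ∣ (#{x : σ → K | MvPolynomial.eval x f ≠ 0} : ℕ) := by
  obtain ⟨g, rfl, hdeg⟩ := exists_map_eq_totalDegree_le hT.surjective f
  have map_eval_lift (x : σ → K) : φ (MvPolynomial.eval (T ∘ x) g) =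
      MvPolynomial.eval x (MvPolynomial.map φ g) := by
    rw [MvPolynomial.map_eval, ← Function.comp_assoc, hT.comp_eq_id, Function.id_comp]
  have dvd_card_sub_sum : (Fintype.card K : R) ∣
      (#{x : σ → K | MvPolynomial.eval x (MvPolynomial.map φ g) ≠ 0} : ℕ) -
        ∑ x : σ → K, MvPolynomial.eval (T ∘ x) g ^ (p ^ a * (Fintype.card K - 1)) := by
    simp only [card_filter, Nat.cast_sum, Nat.cast_ite, Nat.cast_one, Nat.cast_zero,
      ← sum_sub_distrib, ← map_eval_lift]
    rw [show (Fintype.card K : R) = (p : R) ^ a by rw [hK, Nat.cast_pow]]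
    exact dvd_sum fun x _ ↦ pow_dvd_indicator_sub_pow hφ a _
  exact (dvd_iff_dvd_of_dvd_sub dvd_card_sub_sum).2
    (card_dvd_sum_eval_pow hK hT.injective (hdeg.trans_lt hf) a)

end Lift

open WittVector in
theorem card_dvd_card_eval_ne_zero [DecidableEq K] [DecidableEq σ] {f : MvPolynomial σ K}
    (hf : f.totalDegree < Fintype.card σ) :
    Fintype.card K ∣ #{x : σ → K | MvPolynomial.eval x f ≠ 0} := by
  obtain ⟨p, _, a, hp, hK⟩ := FiniteField.card' K
  have : Fact p.Prime := ⟨hp⟩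
  have dvd_of_constantCoeff_eq_zero (z : WittVector p K) (hz : constantCoeff z = 0) :
      (p : WittVector p K) ∣ z := by
    rwa [← Ideal.mem_span_singleton, ← ker_constantCoeff, RingHom.mem_ker]
  have dvd_card := natCast_card_dvd_card_eval_ne_zero hK dvd_of_constantCoeff_eq_zero
    (T := teichmuller p) (teichmuller_coeff_zero p) hf
  rw [hK] at dvd_card ⊢
  exact dvd_of_natCast_dvd_natCast hp (p_nonzero p K) (irreducible p).not_isUnit dvd_card

theorem card_dvd_card_forall_eval_eq_zero {ι : Type*} [Fintype ι] {f : ι → MvPolynomial σ K}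
    (hf : ∑ i, (f i).totalDegree < Fintype.card σ) :
    Fintype.card K ∣ Nat.card {x : σ → K | ∀ i, MvPolynomial.eval x (f i) = 0} := by
  classical
  let nonzeros (g : MvPolynomial σ K) : Finset (σ → K) := {x | MvPolynomial.eval x g ≠ 0}
  have card_zeros : Nat.card {x : σ → K | ∀ i, MvPolynomial.eval x (f i) = 0} =
      #(univ.inf fun i ↦ (nonzeros (f i))ᶜ) := by
    rw [← Nat.card_eq_finsetCard]
    exact Nat.card_congr (Equiv.subtypeEquivRight fun x ↦ by simp [nonzeros, mem_inf])
  have inf_nonzeros (t : Finset ι) : (t.inf fun i ↦ nonzeros (f i)) = nonzeros (∏ i ∈ t, f i) := by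
    ext x
    simp [nonzeros, mem_inf, prod_ne_zero_iff]
  rw [card_zeros, ← Int.natCast_dvd_natCast, inclusion_exclusion_card_inf_compl]
  refine dvd_sum fun t _ ↦ Dvd.dvd.mul_left ?_ _
  rw [inf_nonzeros, Int.natCast_dvd_natCast]
  refine card_dvd_card_eval_ne_zero ?_
  calc (∏ i ∈ t, f i).totalDegree ≤ ∑ i ∈ t, (f i).totalDegree :=
        MvPolynomial.totalDegree_finsetProd _ _
    _ ≤ ∑ i, (f i).totalDegree := sum_le_sum_of_subset (subset_univ _)
    _ < Fintype.card σ := hf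

end AffineZeros

section Cones

variable {K V : Type*} [Field K] [AddCommGroup V] [Module K V] {Z : Set V}

lemma nonZeroEquivProjectivizationProdUnits_apply_fst (v : {v : V // v ≠ 0}) :
    (Projectivization.nonZeroEquivProjectivizationProdUnits K V v).1 = .mk K v.1 v.2 :=
  rfl

lemma card_diff_zero_eq_card_rep_mem_mul (hZ : ∀ (u : Kˣ) (v : V), u • v ∈ Z ↔ v ∈ Z) :
    Nat.card ↥(Z \ {0}) = Nat.card {P : Projectivization K V | P.rep ∈ Z} * Nat.card Kˣ := by
  have mem_iff (v : {v : V // v ≠ 0}) : v.1 ∈ Z ↔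
      (Projectivization.nonZeroEquivProjectivizationProdUnits K V v).1.rep ∈ Z := by
    obtain ⟨u, hu⟩ := Projectivization.exists_smul_eq_mk_rep K v.1 v.2
    rw [nonZeroEquivProjectivizationProdUnits_apply_fst, ← hu, hZ]
  rw [← Nat.card_prod]
  exact Nat.card_congr <|
    calc ↥(Z \ {0}) ≃ {v : {v : V // v ≠ 0} // v.1 ∈ Z} :=
          ((Equiv.subtypeSubtypeEquivSubtypeInter _ _).trans
            (Equiv.subtypeEquivRight fun _ ↦ and_comm)).symm
      _ ≃ {x : Projectivization K V × Kˣ // x.1.rep ∈ Z} := Equiv.subtypeEquiv _ mem_iff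
      _ ≃ {P : Projectivization K V // P.rep ∈ Z} × Kˣ :=
          Equiv.prodSubtypeFstEquivSubtypeProd (p := fun P : Projectivization K V ↦ P.rep ∈ Z)

theorem card_rep_mem_modEq_one [Fintype K] [Finite V]
    (hZ : ∀ (u : Kˣ) (v : V), u • v ∈ Z ↔ v ∈ Z) (h0 : 0 ∈ Z)
    (hdvd : Fintype.card K ∣ Nat.card Z) :
    Nat.card {P : Projectivization K V | P.rep ∈ Z} ≡ 1 [MOD Fintype.card K] := by
  set m := Nat.card {P : Projectivization K V | P.rep ∈ Z} with hm
  have card_eq : Nat.card Z = m * (Fintype.card K - 1) + 1 := by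
    rw [hm, ← Nat.card_eq_fintype_card, ← Nat.card_units, ← card_diff_zero_eq_card_rep_mem_mul hZ]
    exact (Set.ncard_sdiff_singleton_add_one h0 Z.toFinite).symm
  calc m ≡ m + Nat.card Z [MOD Fintype.card K] :=
        ((Nat.modEq_zero_iff_dvd.2 hdvd).add_left m).symm
    _ = m * Fintype.card K + 1 := by
        obtain ⟨k, hk⟩ := Nat.exists_eq_add_one.2 (Fintype.card_pos (α := K))
        rw [card_eq, hk, Nat.add_sub_cancel]
        ring
    _ ≡ 1 [MOD Fintype.card K] := by simp [Nat.ModEq]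

end Cones

lemma eval_smul_of_isHomogeneous {R σ : Type*} [CommSemiring R] {f : MvPolynomial σ R} {d : ℕ}
    (hf : f.IsHomogeneous d) (c : R) (v : σ → R) :
    MvPolynomial.eval (c • v) f = c ^ d * MvPolynomial.eval v f := by
  simp only [MvPolynomial.eval_eq, mul_sum]
  refine sum_congr rfl fun w hw ↦ ?_
  have degree_eq : ∑ i ∈ w.support, w i = d := by
    simpa [Finsupp.weight_apply, Finsupp.sum] using hf (MvPolynomial.mem_support_iff.1 hw)
  simp only [Pi.smul_apply, smul_eq_mul, mul_pow, prod_mul_distrib, prod_pow_eq_pow_sum, degree_eq]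
  ring

/-- Ax–Katz theorem: if `f i` (for `i : Fin r`) are homogeneous polynomials of degrees
`d i ≥ 1` in `n + 1` variables over a finite field `K` with `∑ i, d i ≤ n`, then the number
of points of projective `n`-space over `K` at which all the `f i` vanish is congruent to `1`
modulo the cardinality of `K`. -/
theorem stmt_0 (K : Type*) [Field K] [Fintype K] (n r : ℕ) (hn : 0 < n) (hr : 0 < r)
    (f : Fin r → MvPolynomial (Fin (n + 1)) K) (d : Fin r → ℕ)
    (hd : ∀ i, 1 ≤ d i) (hhom : ∀ i, (f i).IsHomogeneous (d i))
    (hsum : ∑ i, d i ≤ n) :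
    Nat.card {P : Projectivization K (Fin (n + 1) → K) |
      ∀ i, MvPolynomial.eval P.rep (f i) = 0} ≡ 1 [MOD Fintype.card K] := by
  refine card_rep_mem_modEq_one (Z := {v | ∀ i, MvPolynomial.eval v (f i) = 0})
    (fun u v ↦ ?_) (fun i ↦ ?_) ?_
  · simp [Units.smul_def, eval_smul_of_isHomogeneous (hhom _)]
  · have := eval_smul_of_isHomogeneous (hhom i) 0 0
    rwa [zero_smul, zero_pow (Nat.one_le_iff_ne_zero.1 (hd i)), zero_mul] at this
  · have degree_sum_lt : ∑ i, (f i).totalDegree < Fintype.card (Fin (n + 1)) :=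
      calc ∑ i, (f i).totalDegree ≤ ∑ i, d i := sum_le_sum fun i _ ↦ (hhom i).totalDegree_le
        _ < Fintype.card (Fin (n + 1)) := by simpa using Nat.lt_succ_of_le hsum
    exact card_dvd_card_forall_eval_eq_zero degree_sum_lt
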